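/- Let I be the ideal of R = ℚ[x,y,z] generated by z³, yz², xyz, y⁴ − x³z, xy³, x²y², x³y, x⁴. Then I has height 3, the minimal number of generators of I is 8, and the quotient ring R/I is a finite-dimensional ℚ-vector space. -/

import Mathlib

/-!
The ideal `I` contains powers of `x`, `y` and `z` (note
`y ^ 5 = y * (y ^ 4 - x ^ 3 * z) + x ^ 2 * (x * y * z)`), so `R ⧸ I` is generated over `ℚ` by
three nilpotent, hence integral, elements and is finite.
For the same reason every prime containing `I` contains `x, y, z`; above the chain
`0 ⊂ (x) ⊂ (x, y)` it has height at least `3`, and `dim R = 3` bounds it from above.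

For the number of generators, let `coeffVec : R → ℚ⁸` read off the coefficients of the monomials
`z³, yz², xyz, y⁴, xy³, x²y², x³y, x⁴`. No two of these monomials divide each other and none is a
multiple of `x³z`, so `coeffVec (p * f) = p(0) • coeffVec f` for all `f ∈ I`. Hence the images of any
generators of `I` span `coeffVec I` over `ℚ`, and `coeffVec I = ℚ⁸` because the eight given generators
go to the standard basis.
-/

open MvPolynomial

/-- The height of an ideal: the infimum of the heights of prime ideals containing it. -/
noncomputable def idealHeight {R : Type*} [CommRing R] (I : Ideal R) : ℕ∞ :=
  ⨅ p ∈ {p : PrimeSpectrum R | I ≤ p.asIdeal}, Order.height p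

/-- The minimal number of generators of an ideal: the smallest cardinality of a
set of elements of the ring generating it as an ideal. -/
noncomputable def minNumGens {R : Type*} [CommRing R] (I : Ideal R) : ℕ :=
  sInf {n : ℕ | ∃ s : Finset R, s.card = n ∧ Ideal.span (s : Set R) = I}

noncomputable abbrev x : MvPolynomial (Fin 3) ℚ := X 0
noncomputable abbrev y : MvPolynomial (Fin 3) ℚ := X 1
noncomputable abbrev z : MvPolynomial (Fin 3) ℚ := X 2

/-! ### Finiteness and height -/

/-- The powers of the variables lying in `I`, packaged with the common exponent `5`. -/
lemma X_pow_mem (i : Fin 3) : (X i : MvPolynomial (Fin 3) ℚ) ^ 5 ∈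
    Ideal.span {z^3, y*z^2, x*y*z, y^4 - x^3*z, x*y^3, x^2*y^2, x^3*y, x^4} := by
  set J : Ideal (MvPolynomial (Fin 3) ℚ) :=
    Ideal.span {z^3, y*z^2, x*y*z, y^4 - x^3*z, x*y^3, x^2*y^2, x^3*y, x^4} with hJ
  have hx : x^4 ∈ J := Ideal.subset_span (by simp)
  have hz : z^3 ∈ J := Ideal.subset_span (by simp)
  have hy : y^4 - x^3*z ∈ J := Ideal.subset_span (by simp)
  have hxyz : x*y*z ∈ J := Ideal.subset_span (by simp)
  fin_cases i
  · have := J.mul_mem_left x hx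
    convert this using 1
    simp only [Fin.zero_eta]; ring
  · have := J.add_mem (J.mul_mem_left y hy) (J.mul_mem_left (x^2) hxyz)
    convert this using 1
    simp only [Fin.mk_one]; ring
  · have := J.mul_mem_left (z^2) hz
    convert this using 1
    simp only [Fin.reduceFinMk]; ring

lemma finite_quotient (I : Ideal (MvPolynomial (Fin 3) ℚ))
    (h : ∀ i, (X i : MvPolynomial (Fin 3) ℚ) ^ 5 ∈ I) :
    FiniteDimensional ℚ (MvPolynomial (Fin 3) ℚ ⧸ I) := by
  have hfg := fg_adjoin_of_finite (R := ℚ)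
    (s := Set.range fun i : Fin 3 => Ideal.Quotient.mkₐ ℚ I (X i)) (Set.finite_range _) (by
      rintro _ ⟨i, rfl⟩
      refine IsIntegral.of_pow (n := 5) (by norm_num) ?_
      have h0 : (Ideal.Quotient.mkₐ ℚ I (X i)) ^ 5 = 0 := by
        rw [← map_pow]
        exact Ideal.Quotient.eq_zero_iff_mem.mpr (h i)
      rw [h0]
      exact isIntegral_zero)
  have htop : Algebra.adjoin ℚ (Set.range fun i : Fin 3 => Ideal.Quotient.mkₐ ℚ I (X i)) = ⊤ := by
    have h1 := AlgHom.map_adjoin (Ideal.Quotient.mkₐ ℚ I) (Set.range X)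
    rw [adjoin_range_X, Algebra.map_top, ← Set.range_comp] at h1
    change Algebra.adjoin ℚ (Set.range (⇑(Ideal.Quotient.mkₐ ℚ I) ∘ X)) = ⊤
    rw [← h1]
    exact (AlgHom.range_eq_top _).mpr (Ideal.Quotient.mkₐ_surjective ℚ I)
  rw [htop, Algebra.top_toSubmodule] at hfg
  exact ⟨hfg⟩

/-- The prime ideal generated by the variables `X i`, `i ∈ S`, encoded as the kernel of the
substitution setting these variables to zero. -/
noncomputable def varPrime (S : Finset (Fin 3)) : PrimeSpectrum (MvPolynomial (Fin 3) ℚ) :=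
  ⟨RingHom.ker (aeval (R := ℚ) fun i => if i ∈ S then (0 : MvPolynomial (Fin 3) ℚ) else X i),
    RingHom.ker_isPrime _⟩

lemma X_mem_varPrime (S : Finset (Fin 3)) (i : Fin 3) :
    X i ∈ (varPrime S).asIdeal ↔ i ∈ S := by
  simp [varPrime, RingHom.mem_ker]

/-- Modulo `q`, setting to zero variables that belong to `q` changes nothing. -/
lemma varPrime_le (S : Finset (Fin 3)) (q : PrimeSpectrum (MvPolynomial (Fin 3) ℚ))
    (h : ∀ i ∈ S, X i ∈ q.asIdeal) : varPrime S ≤ q := by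
  intro f hf
  have hcomp : (Ideal.Quotient.mkₐ ℚ q.asIdeal).comp
      (aeval (R := ℚ) fun i => if i ∈ S then (0 : MvPolynomial (Fin 3) ℚ) else X i) =
      Ideal.Quotient.mkₐ ℚ q.asIdeal := by
    ext i
    by_cases hi : i ∈ S
    · simpa [hi] using (Ideal.Quotient.eq_zero_iff_mem.mpr (h i hi)).symm
    · simp [hi]
  have hf0 : aeval (R := ℚ) (fun i => if i ∈ S then (0 : MvPolynomial (Fin 3) ℚ) else X i) f = 0 :=
    hf
  have := DFunLike.congr_fun hcomp f
  rw [AlgHom.comp_apply, hf0, map_zero] at this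
  exact Ideal.Quotient.eq_zero_iff_mem.mp this.symm

lemma varPrime_lt (S : Finset (Fin 3)) (q : PrimeSpectrum (MvPolynomial (Fin 3) ℚ))
    (h : ∀ i ∈ S, X i ∈ q.asIdeal) (j : Fin 3) (hj : j ∉ S) (hq : X j ∈ q.asIdeal) :
    varPrime S < q :=
  lt_of_le_not_ge (varPrime_le S q h) fun hle => hj ((X_mem_varPrime S j).mp (hle hq))

lemma three_le_height (q : PrimeSpectrum (MvPolynomial (Fin 3) ℚ))
    (h : ∀ i, X i ∈ q.asIdeal) : 3 ≤ Order.height q := by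
  have h1 := Order.height_add_one_le
    (varPrime_lt ∅ (varPrime {0}) (by simp) 0 (by simp) (by simp [X_mem_varPrime]))
  have h2 := Order.height_add_one_le
    (varPrime_lt {0} (varPrime {0, 1}) (by simp [X_mem_varPrime]) 1 (by simp)
      (by simp [X_mem_varPrime]))
  have h3 := Order.height_add_one_le
    (varPrime_lt {0, 1} q (fun i _ => h i) 2 (by simp) (h 2))
  calc (3 : ℕ∞) = 0 + 1 + 1 + 1 := by norm_num
    _ ≤ Order.height (varPrime ∅) + 1 + 1 + 1 := by gcongr; exact zero_le
    _ ≤ Order.height (varPrime {0}) + 1 + 1 := by gcongr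
    _ ≤ Order.height (varPrime {0, 1}) + 1 := by gcongr
    _ ≤ Order.height q := h3

lemma height_le_three (q : PrimeSpectrum (MvPolynomial (Fin 3) ℚ)) : Order.height q ≤ 3 := by
  have h1 := Order.height_le_krullDim q
  have h2 : ringKrullDim (MvPolynomial (Fin 3) ℚ) = 3 := by
    rw [MvPolynomial.ringKrullDim_of_isNoetherianRing, ringKrullDim_eq_zero_of_field]
    simp
  change _ ≤ ringKrullDim (MvPolynomial (Fin 3) ℚ) at h1
  rw [h2] at h1
  exact WithBot.coe_le_coe.mp h1

/-! ### The number of generators -/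

/-- The exponents of the monomials `z³, yz², xyz, y⁴, xy³, x²y², x³y, x⁴`. -/
def expVec : Fin 8 → Fin 3 → ℕ :=
  ![![0, 0, 3], ![0, 1, 2], ![1, 1, 1], ![0, 4, 0], ![1, 3, 0], ![2, 2, 0], ![3, 1, 0], ![4, 0, 0]]

/-- The monomial `x ^ v 0 * y ^ v 1 * z ^ v 2`. -/
noncomputable def mon (v : Fin 3 → ℕ) : MvPolynomial (Fin 3) ℚ :=
  monomial (Finsupp.equivFunOnFinite.symm v) 1

lemma mon_eq (v : Fin 3 → ℕ) : mon v = x ^ v 0 * y ^ v 1 * z ^ v 2 := by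
  rw [mon, monomial_eq, Finsupp.prod_fintype _ _ (by simp)]
  simp [Fin.prod_univ_three]

/-- The coefficients of the eight monomials with exponents `expVec`. -/
noncomputable def coeffVec : MvPolynomial (Fin 3) ℚ →ₗ[ℚ] (Fin 8 → ℚ) :=
  LinearMap.pi fun i => lcoeff ℚ (Finsupp.equivFunOnFinite.symm (expVec i))

lemma coeffVec_mul_mon (p : MvPolynomial (Fin 3) ℚ) (v : Fin 3 → ℕ) (j : Fin 8) [Decidable (v ≤ expVec j)] :
    coeffVec (p * mon v) j = if v ≤ expVec j then
      coeff (Finsupp.equivFunOnFinite.symm (expVec j) - Finsupp.equivFunOnFinite.symm v) p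
      else 0 := by
  change coeff _ (p * mon v) = _
  rw [mon, coeff_mul_monomial', mul_one]
  exact if_congr Iff.rfl rfl rfl

lemma expVec_le_iff : ∀ i j : Fin 8, expVec i ≤ expVec j ↔ i = j := by
  simp only [Pi.le_def]
  decide

lemma not_le_expVec : ∀ j : Fin 8, ¬ ![3, 0, 1] ≤ expVec j := by
  simp only [Pi.le_def]
  decide

lemma coeffVec_mul_mon_expVec (p : MvPolynomial (Fin 3) ℚ) (i : Fin 8) :
    coeffVec (p * mon (expVec i)) = constantCoeff p • Pi.single i 1 := by
  classical
  ext j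
  rw [coeffVec_mul_mon]
  by_cases h : i = j
  · subst h
    simp [constantCoeff_eq]
  · simp [expVec_le_iff, h, Ne.symm h]

lemma coeffVec_mul_mon_x3z (p : MvPolynomial (Fin 3) ℚ) : coeffVec (p * mon ![3, 0, 1]) = 0 := by
  classical
  ext j
  rw [coeffVec_mul_mon, if_neg (not_le_expVec j)]
  rfl

/-- The eight given generators, indexed like `expVec`. -/
noncomputable def gen (i : Fin 8) : MvPolynomial (Fin 3) ℚ :=
  mon (expVec i) - if i = 3 then mon ![3, 0, 1] else 0

lemma coeffVec_mul_gen (p : MvPolynomial (Fin 3) ℚ) (i : Fin 8) :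
    coeffVec (p * gen i) = constantCoeff p • Pi.single i 1 := by
  rw [gen, mul_sub, map_sub, coeffVec_mul_mon_expVec]
  split_ifs <;> simp [coeffVec_mul_mon_x3z]

lemma range_gen : Set.range gen =
    {z^3, y*z^2, x*y*z, y^4 - x^3*z, x*y^3, x^2*y^2, x^3*y, x^4} := by
  have h : gen = ![z^3, y*z^2, x*y*z, y^4 - x^3*z, x*y^3, x^2*y^2, x^3*y, x^4] := by
    funext i
    fin_cases i <;> simp [gen, mon_eq, expVec]
  ext f
  simp only [h, Matrix.range_cons, Matrix.range_empty, Set.mem_union, Set.mem_insert_iff,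
    Set.mem_singleton_iff, Set.union_empty]

/-- On `I` the map `coeffVec` is linear over `R`, acting on `ℚ⁸` through `R → R / (x, y, z) = ℚ`. -/
lemma coeffVec_mul_of_mem (p f : MvPolynomial (Fin 3) ℚ) (hf : f ∈ Ideal.span (Set.range gen)) :
    coeffVec (p * f) = constantCoeff p • coeffVec f := by
  induction hf using Submodule.span_induction generalizing p with
  | mem f hf =>
    obtain ⟨i, rfl⟩ := hf
    have := coeffVec_mul_gen 1 i
    rw [one_mul] at this
    rw [coeffVec_mul_gen, this]
    simp
  | zero => simp
  | add f g _ _ hf hg => rw [mul_add, map_add, hf, hg, map_add, smul_add]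
  | smul a f _ hf => rw [smul_eq_mul, ← mul_assoc, hf, hf, map_mul, mul_smul]

lemma eight_le_card (s : Finset (MvPolynomial (Fin 3) ℚ))
    (hs : Ideal.span (s : Set (MvPolynomial (Fin 3) ℚ)) = Ideal.span (Set.range gen)) :
    8 ≤ s.card := by
  classical
  have hmem : ∀ f ∈ Ideal.span (s : Set (MvPolynomial (Fin 3) ℚ)),
      coeffVec f ∈ Submodule.span ℚ ((s.image coeffVec : Finset (Fin 8 → ℚ)) : Set (Fin 8 → ℚ)) := by
    intro f hf
    induction hf using Submodule.span_induction with
    | mem f hf => exact Submodule.subset_span (by simpa using ⟨f, hf, rfl⟩)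
    | zero => simp
    | add f g _ _ hf hg => rw [map_add]; exact add_mem hf hg
    | smul a f h hf =>
      rw [smul_eq_mul, coeffVec_mul_of_mem a f (hs ▸ h)]
      exact Submodule.smul_mem _ _ hf
  have htop : Submodule.span ℚ ((s.image coeffVec : Finset (Fin 8 → ℚ)) : Set (Fin 8 → ℚ)) = ⊤ := by
    rw [eq_top_iff, ← (Pi.basisFun ℚ (Fin 8)).span_eq, Submodule.span_le]
    rintro _ ⟨i, rfl⟩
    have h := hmem (gen i) (hs ▸ Ideal.subset_span ⟨i, rfl⟩)
    have h1 := coeffVec_mul_gen 1 i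
    rw [one_mul, map_one, one_smul] at h1
    rw [h1] at h
    simpa using h
  have hcard := finrank_span_finset_le_card (R := ℚ) (s.image coeffVec)
  rw [Set.finrank, htop, finrank_top, Module.finrank_fin_fun] at hcard
  exact hcard.trans Finset.card_image_le

lemma gen_injective : Function.Injective gen := by
  intro i j hij
  have hi := coeffVec_mul_gen 1 i
  rw [hij, coeffVec_mul_gen, map_one, one_smul, one_smul] at hi
  by_contra hne
  have := congr_fun hi i
  simp [hne] at this

theorem stmt_17 (I : Ideal (MvPolynomial (Fin 3) ℚ))
    (hI : I = Ideal.span {z^3, y*z^2, x*y*z, y^4 - x^3*z, x*y^3, x^2*y^2, x^3*y, x^4}) :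
    idealHeight I = 3 ∧ minNumGens I = 8 ∧
    FiniteDimensional ℚ (MvPolynomial (Fin 3) ℚ ⧸ I) := by
  have hpow : ∀ i, (X i : MvPolynomial (Fin 3) ℚ) ^ 5 ∈ I := fun i => hI ▸ X_pow_mem i
  have hgen : I = Ideal.span (Set.range gen) := by rw [hI, range_gen]
  refine ⟨le_antisymm ?_ ?_, ?_, finite_quotient I hpow⟩
  · refine (iInf₂_le (varPrime Finset.univ) ?_).trans (height_le_three _)
    change I ≤ _
    rw [hI, Ideal.span_le]
    intro f hf
    simp only [Set.mem_insert_iff, Set.mem_singleton_iff] at hf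
    rcases hf with rfl | rfl | rfl | rfl | rfl | rfl | rfl | rfl <;>
      simp [varPrime, RingHom.mem_ker]
  · exact le_iInf₂ fun q hq => three_le_height q fun i => q.isPrime.mem_of_pow_mem 5 (hq (hpow i))
  · classical
    refine le_antisymm (Nat.sInf_le ⟨Finset.univ.image gen, ?_, ?_⟩) ?_
    · rw [Finset.card_image_of_injective _ gen_injective]
      simp
    · rw [hgen]
      simp
    · refine le_csInf ⟨_, Finset.univ.image gen, rfl, by rw [hgen]; simp⟩ ?_
      rintro n ⟨s, rfl, hs⟩
      exact eight_le_card s (hs.trans hgen)
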